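/- For every τ ∈ [0, ∞) and every ν ∈ [0,1] one has p(τ, ν) ≥ 0. -/

import Mathlib

/-- Υ_ν := √(1 − ν²). -/
noncomputable def Ups (ν : ℝ) : ℝ := Real.sqrt (1 - ν ^ 2)

/-- w_ν := Υ_ν · cot(π Υ_ν / 2) for ν ∈ [0,1), with w_1 := 2/π (continuous extension). -/
noncomputable def w (ν : ℝ) : ℝ :=
  if ν = 1 then 2 / Real.pi else Ups ν * Real.cot (Real.pi * Ups ν / 2)

/-- η_ν := (√(9+4ν²) − 4ν)/(3(1 − 2 w_ν)) for ν ≠ √3/2, and η_{√3/2} := 1/(√3 (π−2)). -/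
noncomputable def eta (ν : ℝ) : ℝ :=
  if ν = Real.sqrt 3 / 2 then 1 / (Real.sqrt 3 * (Real.pi - 2))
  else (Real.sqrt (9 + 4 * ν ^ 2) - 4 * ν) / (3 * (1 - 2 * w ν))

/-- p(τ,ν) := (1−η_ν²)(1+4τ²)(9+4τ²) + 4ν²(5+4τ²)
  + 4η_ν²(9+4τ²)(sech(πτ)+2τ tanh(πτ)) w_ν − 4η_ν²(9+4τ²) w_ν²
  − 8ν √(4ν² + (1+τ²)(1+4τ²)(9+4τ²)). -/
noncomputable def pfun (τ ν : ℝ) : ℝ :=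
  (1 - eta ν ^ 2) * (1 + 4 * τ ^ 2) * (9 + 4 * τ ^ 2) + 4 * ν ^ 2 * (5 + 4 * τ ^ 2)
    + 4 * eta ν ^ 2 * (9 + 4 * τ ^ 2)
        * (1 / Real.cosh (Real.pi * τ) + 2 * τ * Real.tanh (Real.pi * τ)) * w ν
    - 4 * eta ν ^ 2 * (9 + 4 * τ ^ 2) * (w ν) ^ 2
    - 8 * ν * Real.sqrt (4 * ν ^ 2 + (1 + τ ^ 2) * (1 + 4 * τ ^ 2) * (9 + 4 * τ ^ 2))

/-!
Squaring `3η(1 - 2w) = √(9 + 4ν²) - 4ν` eliminates `w²` from `p` and shows that `p(0,ν) = 0`. For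
`τ² ≥ 2.2` crude bounds suffice. For `τ² ≤ 2.2`, a quartic minorant of `sech(πτ) + 2τ tanh(πτ)`,
obtained by comparing power series after multiplication by `cosh(πτ)`, and a majorant of the square
root that is quadratic in `τ²` give `p(τ,ν) ≥ A τ² + B τ⁴` with `B ≥ 0` on this range.

The coefficient `A` is the delicate one: its bound is sharp at `ν = 0` and, to second order, at
`ν = √3/2`. Near `ν = 0` one uses `w ≤ ν²`. Elsewhere `(1 - 2w) / (3 - 4ν²)` is bounded below by its
tangent line at `ν = √3/2` in the variable `ν²`. That bound compares `πs/2` with the arctangent of a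
rational function of `s = √(1 - ν²)`; their difference vanishes to third order at `s = 1/2`, and
the sign of its derivative is that of a monotone function. With `√(9 + 4ν²) = 3(1 + k²)/(2k)` and
`ν = 3(1 - k²)/(4k)`, what is left of `A ≥ 0` is a polynomial inequality in `k²`.
-/

open Real Set

/-! ### Hyperbolic series -/

lemma hasSum_descFactorial_mul_cosh (j : ℕ) (x : ℝ) :
    HasSum (fun n : ℕ => ((2 * n).descFactorial (2 * j) : ℝ) * (x ^ (2 * n) / (2 * n).factorial))
      (x ^ (2 * j) * cosh x) := by
  rw [← hasSum_nat_add_iff' j, Finset.sum_eq_zero, sub_zero]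
  · refine ((hasSum_cosh x).mul_left (x ^ (2 * j))).congr_fun fun n => ?_
    have hfact : ((2 * (n + j)).factorial : ℝ)
        = (2 * n).factorial * (2 * (n + j)).descFactorial (2 * j) := by
      have := Nat.factorial_mul_descFactorial (show 2 * j ≤ 2 * (n + j) by lia)
      rw [show 2 * (n + j) - 2 * j = 2 * n by lia] at this
      exact_mod_cast this.symm
    have : ((2 * (n + j)).descFactorial (2 * j) : ℝ) ≠ 0 := by
      exact_mod_cast (Nat.descFactorial_pos.2 (by lia)).ne'
    rw [hfact, mul_add, pow_add]
    field_simp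
  · intro n hn
    rw [Nat.descFactorial_eq_zero_iff_lt.2 (by have := Finset.mem_range.1 hn; lia)]
    simp

lemma hasSum_two_mul_mul_sinh (x : ℝ) :
    HasSum (fun n : ℕ => (2 * n : ℝ) * (x ^ (2 * n) / (2 * n).factorial)) (x * sinh x) := by
  rw [← hasSum_nat_add_iff' 1, Finset.sum_range_one, Nat.cast_zero, mul_zero, zero_mul, sub_zero]
  refine ((hasSum_sinh x).mul_left x).congr_fun fun n => ?_
  rw [show 2 * (n + 1) = (2 * n + 1) + 1 by ring, Nat.factorial_succ, pow_succ]
  push_cast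
  field_simp
  ring

lemma cosh_le_one_add_mul_sinh {a : ℝ} (ha : 1 / 2 ≤ a) (x : ℝ) :
    cosh x ≤ 1 + a * (x * sinh x) := by
  have hsum := ((hasSum_ite_eq 0 (1 : ℝ)).add ((hasSum_two_mul_mul_sinh x).mul_left a)).sub
    (hasSum_cosh x)
  refine sub_nonneg.1 (hsum.nonneg fun n => ?_)
  rcases n with _ | n
  · simp
  · have hterm : 0 ≤ x ^ (2 * (n + 1)) / (2 * (n + 1)).factorial :=
      div_nonneg ((even_two_mul _).pow_nonneg x) (Nat.cast_nonneg _)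
    have hcoeff : 0 ≤ a * (2 * (n + 1 : ℕ)) - 1 := by
      push_cast
      nlinarith [n.cast_nonneg (α := ℝ)]
    simpa [sub_mul, mul_assoc] using mul_nonneg hcoeff hterm

lemma quartic_coeff_nonneg {n : ℕ} (hn : 1 ≤ n) :
    0 ≤ 2 / π * (2 * n) - 1 - (2 / π - 1 / 2) * (2 * n).descFactorial 2
      + 1 / 256 * (2 * n).descFactorial 4 := by
  have hπ : 2 / π ≤ 0.63662 := by
    rw [div_le_iff₀ pi_pos]
    linarith [pi_gt_d6]
  obtain rfl | hn : n = 1 ∨ 2 ≤ n := by lia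
  · norm_num [Nat.descFactorial_succ]
    linarith
  · obtain ⟨k, rfl⟩ := Nat.exists_eq_add_of_le' hn
    have hdesc₂ : ((2 * (k + 2)).descFactorial 2 : ℝ) = (2 * k + 4) * (2 * k + 3) := by
      rw [Nat.cast_descFactorial_two]
      push_cast
      ring
    have hdesc₄ : ((2 * (k + 2)).descFactorial 4 : ℝ)
        = (2 * k + 4) * (2 * k + 3) * (2 * k + 2) * (2 * k + 1) := by
      rw [show 2 * (k + 2) = 2 * k + 4 by ring]
      simp only [Nat.descFactorial_succ, Nat.descFactorial_zero, Nat.reduceSubDiff]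
      push_cast
      ring
    have hfactor : (0 : ℝ) ≤ 5 / 2 + k - 0.63662 * (2 * k + 4)
        + 1 / 256 * ((2 * k + 4) * (2 * k + 3) * (2 * k + 1)) := by
      rcases k with _ | k
      · norm_num
      · push_cast
        have := k.cast_nonneg (α := ℝ)
        nlinarith [pow_nonneg this 2, pow_nonneg this 3]
    rw [hdesc₂, hdesc₄]
    push_cast
    nlinarith [mul_nonneg (show (0 : ℝ) ≤ 2 * k + 2 by positivity) hfactor,
      mul_nonneg (show (0 : ℝ) ≤ (2 * k + 4) * (2 * k + 2) by positivity) (sub_nonneg.2 hπ)]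

lemma quartic_mul_cosh_le (x : ℝ) :
    (1 + (2 / π - 1 / 2) * x ^ 2 - 1 / 256 * x ^ 4) * cosh x ≤ 1 + 2 / π * (x * sinh x) := by
  have hsum := (((((hasSum_ite_eq 0 (1 : ℝ)).add ((hasSum_two_mul_mul_sinh x).mul_left (2 / π))).sub
    (hasSum_cosh x)).sub ((hasSum_descFactorial_mul_cosh 1 x).mul_left (2 / π - 1 / 2))).add
    ((hasSum_descFactorial_mul_cosh 2 x).mul_left (1 / 256)))
  suffices 0 ≤ 1 + 2 / π * (x * sinh x) - cosh x - (2 / π - 1 / 2) * (x ^ (2 * 1) * cosh x)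
      + 1 / 256 * (x ^ (2 * 2) * cosh x) by linarith
  refine hsum.nonneg fun n => ?_
  rcases n.eq_zero_or_pos with rfl | hn
  · simp
  · have hterm : 0 ≤ x ^ (2 * n) / (2 * n).factorial :=
      div_nonneg ((even_two_mul n).pow_nonneg x) (Nat.cast_nonneg _)
    rw [if_neg hn.ne']
    refine (mul_nonneg (quartic_coeff_nonneg hn) hterm).trans_eq ?_
    ring

/-- The factor `sech(πτ) + 2τ tanh(πτ)` of `w_ν` in `p(τ,ν)`. -/
noncomputable def sechTanh (τ : ℝ) : ℝ := 1 / cosh (π * τ) + 2 * τ * tanh (π * τ)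

lemma sechTanh_eq (τ : ℝ) :
    sechTanh τ = (1 + 2 / π * (π * τ * sinh (π * τ))) / cosh (π * τ) := by
  rw [sechTanh, tanh_eq_sinh_div_cosh]
  field_simp

lemma one_le_sechTanh (τ : ℝ) : 1 ≤ sechTanh τ := by
  rw [sechTanh_eq, one_le_div (cosh_pos _)]
  refine cosh_le_one_add_mul_sinh ?_ _
  rw [div_le_div_iff₀ two_pos pi_pos]
  linarith [pi_lt_four]

lemma quartic_le_sechTanh (τ : ℝ) :
    1 + (2 * π - π ^ 2 / 2) * τ ^ 2 - 0.381 * τ ^ 4 ≤ sechTanh τ := by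
  have hπ : π ^ 4 ≤ 256 * 0.381 :=
    (pow_le_pow_left₀ pi_pos.le pi_lt_d6.le 4).trans (by norm_num)
  rw [sechTanh_eq, le_div_iff₀ (cosh_pos _)]
  refine le_trans (mul_le_mul_of_nonneg_right ?_ (cosh_pos _).le) (quartic_mul_cosh_le _)
  have hquad : (2 / π - 1 / 2) * (π * τ) ^ 2 = (2 * π - π ^ 2 / 2) * τ ^ 2 := by
    field_simp
  rw [hquad, mul_pow]
  nlinarith [mul_le_mul_of_nonneg_right hπ (show 0 ≤ τ ^ 4 by positivity)]

/-! ### Arctangent comparison -/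

lemma le_max_of_hasDerivAt_mul {f A B : ℝ → ℝ} {a b x : ℝ}
    (hf : ∀ y ∈ Icc a b, HasDerivAt f (A y * B y) y) (hA : ∀ y ∈ Icc a b, 0 ≤ A y)
    (hB : MonotoneOn B (Icc a b)) (hx : x ∈ Icc a b) : f x ≤ max (f a) (f b) := by
  have hcont : ContinuousOn f (Icc a b) := fun y hy => (hf y hy).continuousAt.continuousWithinAt
  have hleft : Icc a x ⊆ Icc a b := Icc_subset_Icc_right hx.2
  have hright : Icc x b ⊆ Icc a b := Icc_subset_Icc_left hx.1
  rcases le_total (B x) 0 with hBx | hBx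
  · have hanti : AntitoneOn f (Icc a x) :=
      antitoneOn_of_hasDerivWithinAt_nonpos (convex_Icc a x) (hcont.mono hleft)
        (fun y hy => (hf y (hleft (interior_subset hy))).hasDerivWithinAt)
        fun y hy => by
          have hy := interior_subset hy
          exact mul_nonpos_of_nonneg_of_nonpos (hA y (hleft hy))
            ((hB (hleft hy) hx hy.2).trans hBx)
    exact le_max_of_le_left (hanti (left_mem_Icc.2 hx.1) (right_mem_Icc.2 hx.1) hx.1)
  · have hmono : MonotoneOn f (Icc x b) :=
      monotoneOn_of_hasDerivWithinAt_nonneg (convex_Icc x b) (hcont.mono hright)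
        (fun y hy => (hf y (hright (interior_subset hy))).hasDerivWithinAt)
        fun y hy => by
          have hy := interior_subset hy
          exact mul_nonneg (hA y (hright hy)) (hBx.trans (hB hx (hright hy) hy.1))
    exact le_max_of_le_right (hmono (left_mem_Icc.2 hx.2) (right_mem_Icc.2 hx.2) hx.2)

lemma mul_cos_le_sin_of_arctan_le {x z : ℝ} (hzx : arctan z ≤ x) (hx : x ≤ π / 2) :
    z * cos x ≤ sin x := by
  have hsin : 0 ≤ sin (x - arctan z) :=
    sin_nonneg_of_nonneg_of_le_pi (by linarith) (by linarith [neg_pi_div_two_lt_arctan z])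
  have hz : sin (arctan z) = z * cos (arctan z) := by
    rw [← tan_mul_cos (cos_arctan_pos z).ne', tan_arctan]
  rw [sin_sub, hz] at hsin
  refine le_of_mul_le_mul_right ?_ (cos_arctan_pos z)
  linarith

lemma sin_le_mul_cos_of_le_arctan {x z : ℝ} (hxz : x ≤ arctan z) (hx : -(π / 2) ≤ x) :
    sin x ≤ z * cos x := by
  have h := mul_cos_le_sin_of_arctan_le (x := -x) (z := -z) (by rw [arctan_neg]; linarith)
    (by linarith)
  rw [cos_neg, sin_neg] at h
  linarith

lemma mul_cos_le_sin {x : ℝ} (h₀ : 0 ≤ x) (h₁ : x ≤ π / 2) : x * cos x ≤ sin x := by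
  rcases h₁.eq_or_lt with rfl | h₁
  · simp
  · have hcos : 0 < cos x := cos_pos_of_mem_Ioo ⟨by linarith [pi_pos], h₁⟩
    rw [← tan_mul_cos hcos.ne']
    exact mul_le_mul_of_nonneg_right (le_tan h₀ h₁) hcos.le

/-- The value at `ν = √3/2` of the quotient `wQuot` below. -/
noncomputable def quotValue : ℝ := (π - 2) / 4

/-- The derivative at `ν = √3/2` of the quotient `wQuot` below with respect to `1 - ν²`. -/
noncomputable def quotSlope : ℝ := (4 + 2 * π - π ^ 2) / 8

/-- The tangent line, in the variable `y = 1 - ν²`, to the quotient `wQuot` at `ν = √3/2`. -/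
noncomputable def quotTangent (y : ℝ) : ℝ := quotValue + quotSlope * (y - 1 / 4)

lemma quotValue_mem : quotValue ∈ Ioo 0.285398 0.285399 := by
  constructor <;> rw [quotValue] <;> linarith [pi_gt_d6, pi_lt_d6]

lemma quotSlope_mem : quotSlope ∈ Ioo 0.0516 0.0518 := by
  constructor <;> rw [quotSlope] <;> nlinarith [pi_gt_d6, pi_lt_d6]

lemma two_mul_quotValue_add_quotSlope :
    2 * (quotValue + quotSlope) = 1 - 4 * quotValue ^ 2 := by
  rw [quotValue, quotSlope]
  ring

lemma quotTangent_monotone : Monotone quotTangent := fun y z hyz => by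
  have := mul_le_mul_of_nonneg_left hyz (show 0 ≤ quotSlope by linarith [quotSlope_mem.1])
  rw [quotTangent, quotTangent]
  linarith

lemma quotTangent_mem {y : ℝ} (hy : y ∈ Icc (0 : ℝ) 1) : quotTangent y ∈ Ioo 0.27 0.33 := by
  have h₀ := quotTangent_monotone hy.1
  have h₁ := quotTangent_monotone hy.2
  have hvalue := quotValue_mem
  have hslope := quotSlope_mem
  simp only [quotTangent, mem_Ioo] at *
  constructor <;> linarith

/-- The denominator for which `2s / tanDenom s` osculates `tan (πs/2)` at `s = 1/2`. Replacing
the tangent by this function turns `wQuot` into its tangent line. -/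
noncomputable def tanDenom (s : ℝ) : ℝ := 1 - (4 * s ^ 2 - 1) * quotTangent (s ^ 2)

lemma sq_mem_Icc {s : ℝ} (hs : s ∈ Icc (0 : ℝ) 1) : s ^ 2 ∈ Icc (0 : ℝ) 1 :=
  ⟨sq_nonneg s, pow_le_one₀ hs.1 hs.2⟩

lemma tanDenom_pos {s : ℝ} (hs : s ∈ Icc (0 : ℝ) 1) : 0 < tanDenom s := by
  have hs := sq_mem_Icc hs
  have hL := quotTangent_mem hs
  rw [tanDenom]
  nlinarith [mul_nonneg hs.1 (sub_nonneg.2 hL.2.le), hs.2, hL.1]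

/-- The angle by which `πs/2` exceeds `arctan (2s / tanDenom s)`. -/
noncomputable def arctanGap (s : ℝ) : ℝ := π / 2 * s - arctan (2 * s / tanDenom s)

/-- The factor of the derivative of `arctanGap` that carries its sign. -/
noncomputable def arctanGapSign (s : ℝ) : ℝ :=
  π / 2 * quotTangent (s ^ 2) ^ 2 - quotSlope * (π + 6) / 4

lemma hasDerivAt_quotTangent_sq (s : ℝ) :
    HasDerivAt (fun x => quotTangent (x ^ 2)) (quotSlope * (2 * s)) s := by
  simpa [quotTangent] using
    (((hasDerivAt_pow 2 s).sub_const (1 / 4 : ℝ)).const_mul quotSlope).const_add quotValue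

lemma hasDerivAt_tanDenom (s : ℝ) :
    HasDerivAt tanDenom
      (-(8 * s * quotTangent (s ^ 2) + (4 * s ^ 2 - 1) * (quotSlope * (2 * s)))) s := by
  have hsq : HasDerivAt (fun x : ℝ => 4 * x ^ 2 - 1) (8 * s) s :=
    (((hasDerivAt_pow 2 s).const_mul 4).sub_const 1).congr_deriv (by norm_num; ring)
  exact (hsq.mul (hasDerivAt_quotTangent_sq s)).const_sub 1

lemma hasDerivAt_arctanGap {s : ℝ} (hs : s ∈ Icc (0 : ℝ) 1) :
    HasDerivAt arctanGap
      ((4 * s ^ 2 - 1) ^ 2 / (tanDenom s ^ 2 + (2 * s) ^ 2) * arctanGapSign s) s := by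
  have hpos := tanDenom_pos hs
  have hquot : HasDerivAt (fun x => 2 * x / tanDenom x) _ s :=
    ((hasDerivAt_id' s).const_mul 2).div (hasDerivAt_tanDenom s) hpos.ne'
  refine (((hasDerivAt_id' s).const_mul (π / 2)).sub hquot.arctan).congr_deriv ?_
  have hsum : 1 + (2 * s / tanDenom s) ^ 2
      = (tanDenom s ^ 2 + (2 * s) ^ 2) / tanDenom s ^ 2 := by
    field_simp
  rw [hsum]
  field_simp
  simp only [arctanGapSign, tanDenom, quotTangent, quotSlope, quotValue]
  ring

lemma monotoneOn_arctanGapSign : MonotoneOn arctanGapSign (Icc 0 1) := by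
  intro s hs t _ hst
  have hle := quotTangent_monotone (pow_le_pow_left₀ hs.1 hst 2)
  have hpos := (quotTangent_mem (sq_mem_Icc hs)).1
  have := pi_pos
  rw [arctanGapSign, arctanGapSign]
  gcongr

lemma arctanGapSign_half_nonneg : 0 ≤ arctanGapSign (1 / 2) := by
  have hvalue := quotValue_mem.1
  have hslope := quotSlope_mem.2
  have hval : quotTangent ((1 / 2) ^ 2) = quotValue := by norm_num [quotTangent]
  rw [arctanGapSign, hval]
  have hsq : (0.285398 : ℝ) ^ 2 ≤ quotValue ^ 2 := pow_le_pow_left₀ (by norm_num) hvalue.le 2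
  nlinarith [pi_gt_d6, pi_lt_d6, mul_le_mul_of_nonneg_left hsq pi_pos.le,
    mul_le_mul_of_nonneg_left hslope.le pi_pos.le]

lemma arctanGap_zero : arctanGap 0 = 0 := by simp [arctanGap]

lemma arctanGap_half : arctanGap (1 / 2) = 0 := by
  have : tanDenom (1 / 2) = 1 := by norm_num [tanDenom]
  rw [arctanGap, this]
  norm_num [arctan_one]
  ring

lemma arctanGap_nonneg {s : ℝ} (hs : s ∈ Icc (1 / 2) 1) : 0 ≤ arctanGap s := by
  have hsub : Icc (1 / 2 : ℝ) 1 ⊆ Icc 0 1 := Icc_subset_Icc_left (by norm_num)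
  have hmono : MonotoneOn arctanGap (Icc (1 / 2) 1) :=
    monotoneOn_of_hasDerivWithinAt_nonneg (convex_Icc _ _)
      (fun x hx => (hasDerivAt_arctanGap (hsub hx)).continuousAt.continuousWithinAt)
      (fun x hx => (hasDerivAt_arctanGap (hsub (interior_subset hx))).hasDerivWithinAt)
      fun x hx => by
        have hx := interior_subset hx
        have := arctanGapSign_half_nonneg.trans
          (monotoneOn_arctanGapSign (by norm_num) (hsub hx) hx.1)
        positivity
  exact arctanGap_half.symm.le.trans (hmono (by norm_num) hs hs.1)

lemma arctanGap_nonpos {s : ℝ} (hs : s ∈ Icc 0 (1 / 2)) : arctanGap s ≤ 0 := by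
  have hsub : Icc (0 : ℝ) (1 / 2) ⊆ Icc 0 1 := Icc_subset_Icc_right (by norm_num)
  have := le_max_of_hasDerivAt_mul (fun x hx => hasDerivAt_arctanGap (hsub hx))
    (fun _ _ => by positivity) (monotoneOn_arctanGapSign.mono hsub) hs
  rwa [arctanGap_zero, arctanGap_half, max_self] at this

lemma two_mul_mul_cos_le {s : ℝ} (hs : s ∈ Icc (1 / 2) 1) :
    2 * s * cos (π * s / 2) ≤ tanDenom s * sin (π * s / 2) := by
  have hgap := arctanGap_nonneg hs
  rw [arctanGap] at hgap
  have h := mul_cos_le_sin_of_arctan_le (x := π * s / 2) (z := 2 * s / tanDenom s)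
    (by linarith) (by nlinarith [pi_pos, hs.2])
  rwa [div_mul_eq_mul_div, div_le_iff₀' (tanDenom_pos ⟨by linarith [hs.1], hs.2⟩)] at h

lemma mul_sin_le_two_mul_mul_cos {s : ℝ} (hs : s ∈ Icc 0 (1 / 2)) :
    tanDenom s * sin (π * s / 2) ≤ 2 * s * cos (π * s / 2) := by
  have hgap := arctanGap_nonpos hs
  rw [arctanGap] at hgap
  have h := sin_le_mul_cos_of_le_arctan (x := π * s / 2) (z := 2 * s / tanDenom s)
    (by linarith) (by nlinarith [pi_pos, hs.1])
  rwa [div_mul_eq_mul_div, le_div_iff₀' (tanDenom_pos ⟨hs.1, by linarith [hs.2]⟩)] at h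

/-! ### The function `w` -/

lemma Ups_sq {ν : ℝ} (hν : ν ∈ Icc (0 : ℝ) 1) : Ups ν ^ 2 = 1 - ν ^ 2 :=
  sq_sqrt (sub_nonneg.2 (sq_mem_Icc hν).2)

lemma Ups_mem_Icc (ν : ℝ) : Ups ν ∈ Icc (0 : ℝ) 1 :=
  ⟨sqrt_nonneg _, sqrt_le_one.2 (sub_le_self _ (sq_nonneg ν))⟩

lemma Ups_pos {ν : ℝ} (hν : ν ∈ Ico (0 : ℝ) 1) : 0 < Ups ν :=
  sqrt_pos.2 (sub_pos.2 (pow_lt_one₀ hν.1 hν.2 two_ne_zero))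

lemma sin_pi_mul_Ups_div_two_pos {ν : ℝ} (hν : ν ∈ Ico (0 : ℝ) 1) :
    0 < sin (π * Ups ν / 2) := by
  have hpos := mul_pos pi_pos (Ups_pos hν)
  have hle := mul_le_mul_of_nonneg_left (Ups_mem_Icc ν).2 pi_pos.le
  exact sin_pos_of_pos_of_lt_pi (by linarith) (by linarith)

lemma w_mul_sin {ν : ℝ} (hν : ν ∈ Ico (0 : ℝ) 1) :
    w ν * sin (π * Ups ν / 2) = Ups ν * cos (π * Ups ν / 2) := by
  rw [w, if_neg hν.2.ne, cot_eq_cos_div_sin, mul_assoc,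
    div_mul_cancel₀ _ (sin_pi_mul_Ups_div_two_pos hν).ne']

lemma w_one : w 1 = 2 / π := if_pos rfl

lemma w_nonneg {ν : ℝ} (hν : ν ∈ Icc (0 : ℝ) 1) : 0 ≤ w ν := by
  rcases eq_or_lt_of_le hν.2 with rfl | hlt
  · rw [w_one]
    positivity
  have hν' : ν ∈ Ico (0 : ℝ) 1 := ⟨hν.1, hlt⟩
  refine nonneg_of_mul_nonneg_left ?_ (sin_pi_mul_Ups_div_two_pos hν')
  have hle := mul_le_mul_of_nonneg_left (Ups_mem_Icc ν).2 pi_pos.le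
  have hnonneg := mul_nonneg pi_pos.le (Ups_mem_Icc ν).1
  rw [w_mul_sin hν']
  exact mul_nonneg (Ups_mem_Icc ν).1
    (cos_nonneg_of_neg_pi_div_two_le_of_le (by linarith) (by linarith))

lemma w_le_two_div_pi {ν : ℝ} (hν : ν ∈ Icc (0 : ℝ) 1) : w ν ≤ 2 / π := by
  rcases eq_or_lt_of_le hν.2 with rfl | hlt
  · exact w_one.le
  have hν' : ν ∈ Ico (0 : ℝ) 1 := ⟨hν.1, hlt⟩
  have hle := mul_le_mul_of_nonneg_left (Ups_mem_Icc ν).2 pi_pos.le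
  have hnonneg := mul_nonneg pi_pos.le (Ups_mem_Icc ν).1
  have hcos := mul_cos_le_sin (x := π * Ups ν / 2) (by linarith) (by linarith)
  refine le_of_mul_le_mul_right ?_ (sin_pi_mul_Ups_div_two_pos hν')
  rw [w_mul_sin hν', div_mul_eq_mul_div, le_div_iff₀ pi_pos]
  linarith

lemma w_le_sq {ν : ℝ} (hν : ν ∈ Icc (0 : ℝ) (4 / 5)) : w ν ≤ ν ^ 2 := by
  have hν' : ν ∈ Ico (0 : ℝ) 1 := ⟨hν.1, hν.2.trans_lt (by norm_num)⟩
  have hsq := Ups_sq (Ico_subset_Icc_self hν')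
  obtain ⟨hs₀, hs₁⟩ := Ups_mem_Icc ν
  have hs : π / 2 ≤ 1 + Ups ν := by
    have : 0.6 ≤ Ups ν := le_sqrt_of_sq_le (by nlinarith [hν.1, hν.2])
    linarith [pi_lt_d2]
  have hcos : cos (π * Ups ν / 2) ≤ (1 + Ups ν) * (1 - Ups ν) := by
    rw [show π * Ups ν / 2 = π / 2 - π / 2 * (1 - Ups ν) by ring, cos_pi_div_two_sub]
    exact (sin_le (mul_nonneg pi_div_two_pos.le (sub_nonneg.2 hs₁))).trans
      (mul_le_mul_of_nonneg_right hs (sub_nonneg.2 hs₁))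
  have hsin : Ups ν ≤ sin (π * Ups ν / 2) := by
    have := mul_le_sin (x := π * Ups ν / 2) (by positivity)
      (by linarith [mul_le_mul_of_nonneg_left hs₁ pi_pos.le])
    convert this using 1
    field_simp
  refine le_of_mul_le_mul_right ?_ (sin_pi_mul_Ups_div_two_pos hν')
  rw [w_mul_sin hν']
  nlinarith [mul_le_mul_of_nonneg_left hcos hs₀,
    mul_le_mul_of_nonneg_left hsin (sq_nonneg ν)]

lemma mul_quotTangent_le {ν : ℝ} (hν : ν ∈ Icc (0 : ℝ) 1) (hsq : ν ^ 2 ≤ 3 / 4) :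
    (3 - 4 * ν ^ 2) * quotTangent (1 - ν ^ 2) ≤ 1 - 2 * w ν := by
  have hν' : ν ∈ Ico (0 : ℝ) 1 := ⟨hν.1, by nlinarith [hν.1]⟩
  have hU := Ups_sq hν
  have hmem : Ups ν ∈ Icc (1 / 2) 1 := ⟨by nlinarith [Ups_pos hν'], (Ups_mem_Icc ν).2⟩
  have htan := two_mul_mul_cos_le hmem
  rw [mul_assoc, ← w_mul_sin hν', ← mul_assoc] at htan
  have := le_of_mul_le_mul_right htan (sin_pi_mul_Ups_div_two_pos hν')
  rw [tanDenom, hU] at this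
  linarith

lemma le_mul_quotTangent {ν : ℝ} (hν : ν ∈ Icc (0 : ℝ) 1) (hsq : 3 / 4 ≤ ν ^ 2) :
    1 - 2 * w ν ≤ (3 - 4 * ν ^ 2) * quotTangent (1 - ν ^ 2) := by
  rcases eq_or_lt_of_le hν.2 with rfl | hlt
  · have hπ : 0.63661 ≤ 2 / π := by
      rw [le_div_iff₀ pi_pos]
      linarith [pi_lt_d6]
    have hvalue := quotValue_mem.2
    have hslope := quotSlope_mem.1
    norm_num [w_one, quotTangent]
    linarith
  have hν' : ν ∈ Ico (0 : ℝ) 1 := ⟨hν.1, hlt⟩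
  have hU := Ups_sq hν
  have htan := mul_sin_le_two_mul_mul_cos ⟨(Ups_mem_Icc ν).1, by nlinarith [Ups_pos hν']⟩
  rw [mul_assoc, ← w_mul_sin hν', ← mul_assoc] at htan
  have := le_of_mul_le_mul_right htan (sin_pi_mul_Ups_div_two_pos hν')
  rw [tanDenom, hU] at this
  linarith

/-! ### The function `eta` -/

/-- `(1 - 2 w_ν) / (3 - 4ν²)`, extended continuously to `ν = √3/2`. It removes the singularity
of `eta` there. -/
noncomputable def wQuot (ν : ℝ) : ℝ :=
  if ν = √3 / 2 then quotValue else (1 - 2 * w ν) / (3 - 4 * ν ^ 2)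

/-- The square root `√(9 + 4ν²)` in the definition of `eta`. -/
noncomputable def etaRoot (ν : ℝ) : ℝ := √(9 + 4 * ν ^ 2)

lemma etaRoot_sq (ν : ℝ) : etaRoot ν ^ 2 = 9 + 4 * ν ^ 2 := sq_sqrt (by positivity)

lemma etaRoot_pos (ν : ℝ) : 0 < etaRoot ν := sqrt_pos.2 (by positivity)

lemma eq_sqrt_three_div_two_iff {ν : ℝ} (hν : 0 ≤ ν) : ν = √3 / 2 ↔ 3 - 4 * ν ^ 2 = 0 := by
  rw [← pow_left_inj₀ hν (by positivity) two_ne_zero, div_pow, sq_sqrt zero_le_three]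
  constructor <;> intro h <;> linarith

lemma one_sub_two_mul_w {ν : ℝ} (hν : ν ∈ Icc (0 : ℝ) 1) :
    1 - 2 * w ν = (3 - 4 * ν ^ 2) * wQuot ν := by
  rw [wQuot]
  split_ifs with h
  · have hzero := (eq_sqrt_three_div_two_iff hν.1).1 h
    have hge := mul_quotTangent_le hν (by linarith)
    have hle := le_mul_quotTangent hν (by linarith)
    rw [hzero, zero_mul] at hge hle ⊢
    exact hle.antisymm hge
  · have hne := mt (eq_sqrt_three_div_two_iff hν.1).2 h
    field_simp

lemma quotTangent_le_wQuot {ν : ℝ} (hν : ν ∈ Icc (0 : ℝ) 1) :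
    quotTangent (1 - ν ^ 2) ≤ wQuot ν := by
  rcases lt_trichotomy (3 - 4 * ν ^ 2) 0 with hneg | hzero | hpos
  · rw [← mul_le_mul_left_of_neg hneg, ← one_sub_two_mul_w hν]
    exact le_mul_quotTangent hν (by linarith)
  · rw [wQuot, if_pos ((eq_sqrt_three_div_two_iff hν.1).2 hzero), quotTangent]
    exact le_of_eq (by rw [show 1 - ν ^ 2 - 1 / 4 = 0 by linarith]; ring)
  · refine le_of_mul_le_mul_left ?_ hpos
    rw [← one_sub_two_mul_w hν]
    exact mul_quotTangent_le hν (by linarith)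

lemma wQuot_pos {ν : ℝ} (hν : ν ∈ Icc (0 : ℝ) 1) : 0 < wQuot ν := by
  linarith [(quotTangent_mem (Icc.one_sub_mem (sq_mem_Icc hν))).1, quotTangent_le_wQuot hν]

lemma one_third_sub_le_wQuot {ν : ℝ} (hν : ν ∈ Icc (0 : ℝ) (1 / 4)) :
    1 / 3 - ν ^ 2 / 4 ≤ wQuot ν := by
  have hw := w_le_sq ⟨hν.1, hν.2.trans (by norm_num)⟩
  have hmul := one_sub_two_mul_w ⟨hν.1, hν.2.trans (by norm_num)⟩
  have hsq : ν ^ 2 ≤ (1 / 4) ^ 2 := pow_le_pow_left₀ hν.1 hν.2 2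
  refine le_of_mul_le_mul_left ?_ (show 0 < 3 - 4 * ν ^ 2 by linarith)
  nlinarith [mul_nonneg (sq_nonneg ν) (show 0 ≤ (1 / 4) ^ 2 - ν ^ 2 by linarith)]

lemma eta_eq {ν : ℝ} (hν : ν ∈ Icc (0 : ℝ) 1) :
    eta ν = 1 / ((etaRoot ν + 4 * ν) * wQuot ν) := by
  have hroot := etaRoot_sq ν
  have hpos := etaRoot_pos ν
  have hsum : 0 < etaRoot ν + 4 * ν := by linarith [hν.1]
  rw [eta]
  split_ifs with h
  · have hzero := (eq_sqrt_three_div_two_iff hν.1).1 h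
    have hE : etaRoot ν = 4 * ν :=
      (pow_left_inj₀ hpos.le (by linarith [hν.1]) two_ne_zero).1 (by linarith)
    rw [hE, wQuot, if_pos h, quotValue, h]
    congr 1
    ring
  · have hne := mt (eq_sqrt_three_div_two_iff hν.1).2 h
    have hg := (wQuot_pos hν).ne'
    rw [one_sub_two_mul_w hν, ← etaRoot]
    field_simp
    linear_combination hroot

lemma three_mul_eta_mul {ν : ℝ} (hν : ν ∈ Icc (0 : ℝ) 1) :
    3 * eta ν * (1 - 2 * w ν) = etaRoot ν - 4 * ν := by
  have hsum : 0 < etaRoot ν + 4 * ν := by linarith [hν.1, etaRoot_pos ν]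
  have hg := wQuot_pos hν
  rw [eta_eq hν, one_sub_two_mul_w hν]
  field_simp
  linear_combination -etaRoot_sq ν

lemma three_add_le_etaRoot {ν : ℝ} (hν : ν ∈ Icc (0 : ℝ) 1) : 3 + 0.6 * ν ^ 2 ≤ etaRoot ν :=
  le_sqrt_of_sq_le (by nlinarith [(sq_mem_Icc hν).1, (sq_mem_Icc hν).2])

lemma add_mul_le_etaRoot (ν : ℝ) : 2.4 + 1.2 * ν ≤ etaRoot ν :=
  le_sqrt_of_sq_le (by nlinarith [sq_nonneg (1.6 * ν - 1.8)])

lemma one_add_mul_le_mul_wQuot {ν : ℝ} (hν : ν ∈ Icc (0 : ℝ) 1) :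
    1 + 1.06 * ν ≤ (etaRoot ν + 4 * ν) * wQuot ν := by
  have hE := three_add_le_etaRoot hν
  obtain ⟨h₀, h₁⟩ := hν
  rcases le_total ν (1 / 4) with hsmall | hlarge
  · have hg := one_third_sub_le_wQuot ⟨h₀, hsmall⟩
    have hsum : 3 + 4 * ν ≤ etaRoot ν + 4 * ν := by linarith [sq_nonneg ν]
    refine le_trans ?_ (mul_le_mul hsum hg (by nlinarith) (by linarith [etaRoot_pos ν]))
    nlinarith [mul_nonneg h₀ h₀, mul_nonneg (mul_nonneg h₀ h₀) (sub_nonneg.2 hsmall)]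
  · have hg : 0.324 - 0.0518 * ν ^ 2 ≤ wQuot ν := by
      refine le_trans ?_ (quotTangent_le_wQuot ⟨h₀, h₁⟩)
      have hvalue := quotValue_mem.1
      obtain ⟨hslope, hslope'⟩ := quotSlope_mem
      rw [quotTangent]
      nlinarith [sq_nonneg ν]
    have hsum : 3 + 0.6 * ν ^ 2 + 4 * ν ≤ etaRoot ν + 4 * ν := by linarith
    refine le_trans ?_ (mul_le_mul hsum hg (by nlinarith) (by linarith [etaRoot_pos ν]))
    nlinarith [mul_nonneg (sub_nonneg.2 hlarge) (sub_nonneg.2 h₁),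
      mul_nonneg (mul_nonneg (sub_nonneg.2 hlarge) (sub_nonneg.2 h₁)) h₀,
      mul_nonneg (mul_nonneg (sub_nonneg.2 hlarge) (sub_nonneg.2 h₁)) (mul_nonneg h₀ h₀)]

lemma eta_sq_mul_le {ν : ℝ} (hν : ν ∈ Icc (0 : ℝ) 1) : eta ν ^ 2 * (1 + 1.06 * ν) ^ 2 ≤ 1 := by
  have hle := one_add_mul_le_mul_wQuot hν
  have hpos : 0 < 1 + 1.06 * ν := by linarith [hν.1]
  rw [← mul_pow, eta_eq hν, one_div_mul_eq_div]
  exact pow_le_one₀ (div_nonneg hpos.le (hpos.le.trans hle))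
    ((div_le_one (hpos.trans_le hle)).2 hle)

/-! ### The linear coefficient -/

/-- The parameter `k` in the rational parametrization `√(9 + 4ν²) = 3(1 + k²)/(2k)`,
`ν = 3(1 - k²)/(4k)`. -/
noncomputable def etaParam (ν : ℝ) : ℝ := (etaRoot ν - 2 * ν) / 3

lemma etaParam_mem {ν : ℝ} (hν : ν ∈ Icc (0 : ℝ) 1) : etaParam ν ∈ Icc 0.53 1 := by
  have hroot := etaRoot_sq ν
  have hpos := etaRoot_pos ν
  obtain ⟨h₀, h₁⟩ := hν
  rw [etaParam]
  constructor
  · have : 2 * ν + 1.59 ≤ etaRoot ν := le_sqrt_of_sq_le (by nlinarith)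
    linarith
  · nlinarith

lemma etaParam_mul (ν : ℝ) : etaParam ν * (etaRoot ν + 2 * ν) = 3 := by
  rw [etaParam]
  linear_combination etaRoot_sq ν / 3

lemma etaRoot_eq {ν : ℝ} (hν : ν ∈ Icc (0 : ℝ) 1) :
    etaRoot ν = 3 * (1 + etaParam ν ^ 2) / (2 * etaParam ν) := by
  have hk : 0 < etaParam ν := by linarith [(etaParam_mem hν).1]
  have hdiff : 3 * etaParam ν = etaRoot ν - 2 * ν := by rw [etaParam]; ring
  rw [eq_div_iff (by positivity)]
  linear_combination etaParam_mul ν - etaParam ν * hdiff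

lemma eq_etaParam {ν : ℝ} (hν : ν ∈ Icc (0 : ℝ) 1) :
    ν = 3 * (1 - etaParam ν ^ 2) / (4 * etaParam ν) := by
  have hk : 0 < etaParam ν := by linarith [(etaParam_mem hν).1]
  have hdiff : 3 * etaParam ν = etaRoot ν - 2 * ν := by rw [etaParam]; ring
  rw [eq_div_iff (by positivity)]
  linear_combination etaParam_mul ν + etaParam ν * hdiff

lemma sq_eq_etaParam {ν : ℝ} (hν : ν ∈ Icc (0 : ℝ) 1) :
    ν ^ 2 = 9 * (1 - etaParam ν ^ 2) ^ 2 / (16 * etaParam ν ^ 2) := by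
  have h := congrArg (· ^ 2) (eq_etaParam hν)
  simp only [div_pow, mul_pow] at h
  rw [h]
  norm_num

/-- The quadratic form in `g = wQuot ν` whose sign is that of the linear coefficient in `τ²` of
the lower bound for `p(τ,ν)`, written in terms of `m = (etaParam ν)²`; here `q` and `γ` stand for
`quotValue` and `quotSlope`. -/
noncomputable def slopeForm (q γ m g : ℝ) : ℝ :=
  (3 - m) ^ 2 * (63 * m ^ 2 - 31 * m + 4) * g ^ 2
    - 12 * (q + γ) * m * (1 + m) * (3 * m - 1) * (3 - m) * g - 32 * q ^ 2 * m ^ 2 * (1 + m)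

lemma quadratic_nonneg_of_le {a b c x y : ℝ} (hc : 0 ≤ c) (ha : 0 ≤ a) (hx : 0 < x) (hxy : x ≤ y)
    (h : 0 ≤ a * x ^ 2 - b * x - c) : 0 ≤ a * y ^ 2 - b * y - c := by
  have hx' : 0 ≤ a * x - b := nonneg_of_mul_nonneg_right (by linarith) hx
  have hy' : a * x - b ≤ a * y - b := by gcongr
  linarith [mul_le_mul hxy hy' hx' (hx.le.trans hxy)]

lemma slopeForm_nonneg_of_le {q γ m g g' : ℝ} (hm : 0 ≤ m) (hg : 0 < g) (hgg' : g ≤ g')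
    (h : 0 ≤ slopeForm q γ m g) : 0 ≤ slopeForm q γ m g' := by
  have ha : 0 ≤ (3 - m) ^ 2 * (63 * m ^ 2 - 31 * m + 4) :=
    mul_nonneg (sq_nonneg _) (by nlinarith [sq_nonneg (126 * m - 31)])
  rw [slopeForm] at *
  exact quadratic_nonneg_of_le (by positivity) ha hg hgg' h

-- The double zero at `m = 1/3`, that is `ν = √3/2`, reflects that `g = q` there for every `γ`.
lemma slopeForm_tangent_eq {m : ℝ} (hm : m ≠ 0) (q γ : ℝ) :
    slopeForm q γ m (q + γ * (3 * (3 * m - 1) * (3 - m) / (16 * m)))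
      = (3 * m - 1) ^ 2 * (m ^ 2 * (11 * m ^ 2 - 51 * m + 36) * q ^ 2
        + 3 / 8 * m * (3 - m) * (27 * m ^ 3 - 152 * m ^ 2 + 177 * m - 36) * (q * γ)
        + 9 / 256 * (3 - m) ^ 2 * (63 * m ^ 4 - 473 * m ^ 3 + 693 * m ^ 2 - 303 * m + 36) * γ ^ 2)
        / m ^ 2 := by
  rw [slopeForm]
  field_simp
  ring

lemma slopeForm_tangent_nonneg {q γ m : ℝ} (hm : m ∈ Icc 0.28 0.85) (hγ : 0 ≤ γ)
    (hγq : 5 * γ ≤ q) : 0 ≤ slopeForm q γ m (q + γ * (3 * (3 * m - 1) * (3 - m) / (16 * m))) := by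
  have hx := sub_nonneg.2 hm.1
  have hy := sub_nonneg.2 hm.2
  have hmpos : 0 < m := by linarith
  rw [slopeForm_tangent_eq hmpos.ne']
  have ha : 0.4 ≤ m ^ 2 * (11 * m ^ 2 - 51 * m + 36) := by
    nlinarith [mul_nonneg hx hy, mul_nonneg (mul_nonneg hx hy) hx, mul_nonneg (mul_nonneg hx hy) hy,
      mul_nonneg (mul_nonneg hx hy) (mul_nonneg hx hy)]
  have hb : 0 ≤ 3 / 8 * m * (3 - m) * (27 * m ^ 3 - 152 * m ^ 2 + 177 * m - 36) := by
    have : 0 ≤ 27 * m ^ 3 - 152 * m ^ 2 + 177 * m - 36 := by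
      nlinarith [mul_nonneg hx hy, mul_nonneg (mul_nonneg hx hy) hx]
    have : 0 ≤ 3 - m := by linarith
    positivity
  have hc : -10 ≤
      9 / 256 * (3 - m) ^ 2 * (63 * m ^ 4 - 473 * m ^ 3 + 693 * m ^ 2 - 303 * m + 36) := by
    have hfactor : -30 ≤ 63 * m ^ 4 - 473 * m ^ 3 + 693 * m ^ 2 - 303 * m + 36 := by
      nlinarith [mul_nonneg hx hy, mul_nonneg (mul_nonneg hx hy) hx, pow_pos hmpos 4]
    have hsq : 9 / 256 * (3 - m) ^ 2 ≤ 1 / 3 := by nlinarith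
    nlinarith [mul_nonneg (sq_nonneg (3 - m)) (neg_le_iff_add_nonneg.1 hfactor)]
  generalize m ^ 2 * (11 * m ^ 2 - 51 * m + 36) = a at *
  generalize 3 / 8 * m * (3 - m) * (27 * m ^ 3 - 152 * m ^ 2 + 177 * m - 36) = b at *
  generalize 9 / 256 * (3 - m) ^ 2 * (63 * m ^ 4 - 473 * m ^ 3 + 693 * m ^ 2 - 303 * m + 36) = c
    at *
  have : 0 ≤ b * (q * γ) := mul_nonneg hb (mul_nonneg (by linarith) hγ)
  have : 0 ≤ a * (q ^ 2 - 25 * γ ^ 2) := mul_nonneg (by linarith) (by nlinarith)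
  have : 0 ≤ (25 * a + c) * γ ^ 2 := mul_nonneg (by linarith) (sq_nonneg γ)
  exact div_nonneg (mul_nonneg (sq_nonneg _) (by linarith)) (sq_nonneg m)

lemma slopeForm_near_one_nonneg {q γ m : ℝ} (hq : q ∈ Ioo 0.285398 0.285399)
    (hqγ : 2 * (q + γ) = 1 - 4 * q ^ 2) (hm : m ∈ Icc 0.85 1) :
    0 ≤ slopeForm q γ m (1 / 3 - 0.03 * (1 - m)) := by
  obtain ⟨u, rfl⟩ : ∃ u, m = 1 - u := ⟨1 - m, by ring⟩
  have hu : 0 ≤ u := by linarith [hm.2]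
  have hu' : 0 ≤ 0.15 - u := by linarith [hm.1]
  have hQ : 0.08145 ≤ q ^ 2 := by nlinarith [hq.1]
  have hQ' : q ^ 2 ≤ 0.08146 := by nlinarith [hq.1, hq.2]
  -- `slopeForm` is affine in `q²`, with both coefficients divisible by `u`.
  have hslope : 32 * (1 - u) ^ 2 * (2 - u)
      ≤ 24 * (1 - u) * (2 - u) * (2 - 3 * u) * (2 + u) * (1 / 3 - 0.03 * u) + 100 * u := by
    nlinarith [pow_nonneg hu 2, pow_nonneg hu 3, pow_nonneg hu 4, pow_nonneg hu 5]
  have hvalue : u ≤ (2 + u) ^ 2 * (63 * (1 - u) ^ 2 - 31 * (1 - u) + 4) * (1 / 3 - 0.03 * u) ^ 2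
      - 6 * (1 - 4 * 0.08145) * (1 - u) * (2 - u) * (2 - 3 * u) * (2 + u) * (1 / 3 - 0.03 * u)
      - 32 * 0.08145 * (1 - u) ^ 2 * (2 - u) := by
    nlinarith [mul_nonneg hu hu', mul_nonneg (pow_nonneg hu 2) hu',
      mul_nonneg (pow_nonneg hu 3) hu', mul_nonneg (pow_nonneg hu 4) hu',
      mul_nonneg (pow_nonneg hu 5) hu', pow_nonneg hu 2, pow_nonneg hu 3, pow_nonneg hu 4,
      pow_nonneg hu 5, pow_nonneg hu 6]
  have hscaled := mul_le_mul_of_nonneg_left hslope (sub_nonneg.2 hQ)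
  have hsmall := mul_le_mul_of_nonneg_right hQ' hu
  rw [slopeForm, show 12 * (q + γ) = 6 * (1 - 4 * q ^ 2) by linarith]
  linarith

lemma slopeForm_wQuot_nonneg {ν : ℝ} (hν : ν ∈ Icc (0 : ℝ) 1) :
    0 ≤ slopeForm quotValue quotSlope (etaParam ν ^ 2) (wQuot ν) := by
  obtain ⟨hk₀, hk₁⟩ := etaParam_mem hν
  have hsq := sq_eq_etaParam hν
  have hν' := eq_etaParam hν
  have hslope := quotSlope_mem
  have hvalue := quotValue_mem
  set k := etaParam ν
  have hm₀ : 0.28 ≤ k ^ 2 := by nlinarith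
  have hm₁ : k ^ 2 ≤ 1 := pow_le_one₀ (by linarith) hk₁
  rcases le_total (k ^ 2) 0.85 with hm | hm
  · have htan : quotTangent (1 - ν ^ 2)
        = quotValue + quotSlope * (3 * (3 * k ^ 2 - 1) * (3 - k ^ 2) / (16 * k ^ 2)) := by
      rw [quotTangent, hsq]
      field_simp
      ring
    refine slopeForm_nonneg_of_le (sq_nonneg k) ?_ (quotTangent_le_wQuot hν) ?_
    · linarith [(quotTangent_mem (Icc.one_sub_mem (sq_mem_Icc hν))).1]
    · rw [htan]
      exact slopeForm_tangent_nonneg ⟨hm₀, hm⟩ (by linarith [hslope.1])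
        (by linarith [hslope.2, hvalue.1])
  · have hsmall : ν ≤ 1 / 4 := by
      rw [hν', div_le_iff₀ (by linarith)]
      nlinarith
    have hg : 1 / 3 - 0.03 * (1 - k ^ 2) ≤ wQuot ν := by
      refine le_trans ?_ (one_third_sub_le_wQuot ⟨hν.1, hsmall⟩)
      have : ν ^ 2 ≤ 0.12 * (1 - k ^ 2) := by
        rw [hsq, div_le_iff₀ (by positivity)]
        nlinarith
      linarith
    exact slopeForm_nonneg_of_le (sq_nonneg k) (by linarith) hg
      (slopeForm_near_one_nonneg hvalue two_mul_quotValue_add_quotSlope ⟨hm, hm₁⟩)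

lemma eta_sq_eq {ν : ℝ} (hν : ν ∈ Icc (0 : ℝ) 1) :
    eta ν ^ 2 = 4 * etaParam ν ^ 2 / (9 * (3 - etaParam ν ^ 2) ^ 2 * wQuot ν ^ 2) := by
  obtain ⟨hk₀, hk₁⟩ := etaParam_mem hν
  have hm₁ : etaParam ν ^ 2 ≤ 1 := pow_le_one₀ (by linarith) hk₁
  have hg := wQuot_pos hν
  have hsum : etaRoot ν + 4 * ν = 3 * (3 - etaParam ν ^ 2) / (2 * etaParam ν) := by
    have hν' := eq_etaParam hν
    rw [etaRoot_eq hν]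
    generalize etaParam ν = k at *
    rw [hν']
    field_simp
    ring
  have : 0 < 3 - etaParam ν ^ 2 := by linarith
  rw [eta_eq hν, hsum]
  field_simp
  norm_num

lemma one_sub_w_mul {ν : ℝ} (hν : ν ∈ Icc (0 : ℝ) 1) :
    1 - w ν * (2 * π - π ^ 2 / 2)
      = 4 * quotValue ^ 2 + 2 * (quotValue + quotSlope) * (3 - 4 * ν ^ 2) * wQuot ν := by
  have hw := one_sub_two_mul_w hν
  rw [quotValue, quotSlope]
  linear_combination (π - π ^ 2 / 4) * hw

/-- The coefficient of `τ²` in the lower bound for `p(τ,ν)`. -/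
noncomputable def linearCoeff (ν : ℝ) : ℝ :=
  36 * (1 - eta ν ^ 2) + 36 * eta ν ^ 2 * w ν * (2 * π - π ^ 2 / 2)
    + 32 / 9 * ν * etaRoot ν + 64 / 9 * ν ^ 2 - 196 * ν / etaRoot ν

lemma linearCoeff_eq {ν : ℝ} (hν : ν ∈ Icc (0 : ℝ) 1) :
    linearCoeff ν = 2 * slopeForm quotValue quotSlope (etaParam ν ^ 2) (wQuot ν)
      / ((3 - etaParam ν ^ 2) ^ 2 * wQuot ν ^ 2 * etaParam ν ^ 2 * (1 + etaParam ν ^ 2)) := by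
  obtain ⟨hk₀, hk₁⟩ := etaParam_mem hν
  have hm₁ : etaParam ν ^ 2 ≤ 1 := pow_le_one₀ (by linarith) hk₁
  have hm₃ : 0 < 3 - etaParam ν ^ 2 := by linarith
  have hg := wQuot_pos hν
  have hsq := sq_eq_etaParam hν
  have hlin : linearCoeff ν = 36 - 36 * eta ν ^ 2 * (1 - w ν * (2 * π - π ^ 2 / 2))
      + 32 / 9 * ν * etaRoot ν + 64 / 9 * ν ^ 2 - 196 * ν / etaRoot ν := by
    rw [linearCoeff]
    ring
  have hE := etaRoot_eq hν
  have hν' := eq_etaParam hν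
  rw [hlin, one_sub_w_mul hν, eta_sq_eq hν, hE, hsq, slopeForm]
  generalize etaParam ν = k at *
  generalize wQuot ν = g at *
  rw [hν']
  field_simp
  ring

lemma linearCoeff_nonneg {ν : ℝ} (hν : ν ∈ Icc (0 : ℝ) 1) : 0 ≤ linearCoeff ν := by
  have hform := slopeForm_wQuot_nonneg hν
  rw [linearCoeff_eq hν]
  positivity

/-! ### Positivity -/

lemma pfun_eq {ν : ℝ} (hν : ν ∈ Icc (0 : ℝ) 1) (τ : ℝ) :
    pfun τ ν = (9 + 4 * τ ^ 2) *
        (4 * τ ^ 2 * (1 - eta ν ^ 2) + 4 * eta ν ^ 2 * w ν * (sechTanh τ - 1))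
      + 8 / 9 * ν * etaRoot ν * (9 + 4 * τ ^ 2) + 64 / 9 * ν ^ 2 * τ ^ 2
      - 8 * ν * √(4 * ν ^ 2 + (1 + τ ^ 2) * (1 + 4 * τ ^ 2) * (9 + 4 * τ ^ 2)) := by
  have heta : 9 * eta ν ^ 2 * (1 - 2 * w ν) ^ 2 = (etaRoot ν - 4 * ν) ^ 2 := by
    rw [← three_mul_eta_mul hν]
    ring
  rw [pfun, ← sechTanh]
  linear_combination (-1 - 4 / 9 * τ ^ 2) * heta - (1 + 4 / 9 * τ ^ 2) * etaRoot_sq ν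

lemma sqrt_le_quadratic {ν t : ℝ} (hν : ν ∈ Icc (0 : ℝ) 1) (ht : 0 ≤ t) :
    √(4 * ν ^ 2 + (1 + t) * (1 + 4 * t) * (9 + 4 * t))
      ≤ etaRoot ν + 49 / (2 * etaRoot ν) * t + 1.4 * t ^ 2 := by
  have hE := etaRoot_sq ν
  have hpos := etaRoot_pos ν
  have hsq := sq_mem_Icc hν
  have hE₃ : 3 ≤ etaRoot ν := by linarith [three_add_le_etaRoot hν, hsq.1]
  have hE₄ : etaRoot ν ≤ 3.606 := by nlinarith [hsq.2]
  generalize etaRoot ν = E at *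
  rw [sqrt_le_left (by positivity)]
  obtain ⟨a, ha⟩ : ∃ a, a = 49 / (2 * E) := ⟨_, rfl⟩
  have hEa : 2 * E * a = 49 := by
    rw [ha]
    field_simp
  have ha₀ : 6.79 ≤ a := by
    rw [ha, le_div_iff₀ (by positivity)]
    linarith
  have hcoeff : 56 ≤ 2.8 * E + a ^ 2 := by nlinarith
  rw [← ha]
  calc 4 * ν ^ 2 + (1 + t) * (1 + 4 * t) * (9 + 4 * t)
      = E ^ 2 + 2 * E * a * t + 56 * t ^ 2 + 16 * t ^ 3 := by rw [hE, hEa]; ring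
    _ ≤ E ^ 2 + 2 * E * a * t + (2.8 * E + a ^ 2) * t ^ 2 + 2.8 * a * t ^ 3 + 1.96 * t ^ 4 := by
        have := mul_le_mul_of_nonneg_right hcoeff (sq_nonneg t)
        have := mul_le_mul_of_nonneg_right ha₀ (pow_nonneg ht 3)
        linarith [pow_nonneg ht 3, pow_nonneg ht 4]
    _ = (E + a * t + 1.4 * t ^ 2) ^ 2 := by ring

lemma eight_mul_sqrt_le {ν t : ℝ} (hν : ν ∈ Icc (0 : ℝ) 1) (ht : 2.2 ≤ t) :
    8 * √(4 * ν ^ 2 + (1 + t) * (1 + 4 * t) * (9 + 4 * t))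
      ≤ (9 + 4 * t) * (3.04 * t + 3.2) + 7.1 * t := by
  rw [← le_div_iff₀' (by norm_num), sqrt_le_left (by nlinarith)]
  have hx := sub_nonneg.2 ht
  nlinarith [(sq_mem_Icc hν).2, pow_nonneg hx 2, pow_nonneg hx 3, pow_nonneg hx 4]

/-- The coefficient of `τ⁴` in the lower bound for `p(τ,ν)`. It depends on `t = τ²` because of the
factor `9 + 4τ²` in front of the quartic minorant of `sechTanh`. -/
noncomputable def quadraticCoeff (ν t : ℝ) : ℝ :=
  16 * (1 - eta ν ^ 2)
    + 4 * eta ν ^ 2 * w ν * (4 * (2 * π - π ^ 2 / 2) - 9 * 0.381 - 4 * 0.381 * t) - 11.2 * ν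

lemma quadraticCoeff_nonneg {ν t : ℝ} (hν : ν ∈ Icc (0 : ℝ) 1) (ht : t ≤ 2.2) :
    0 ≤ quadraticCoeff ν t := by
  have hw := w_nonneg hν
  have hX := eta_sq_mul_le hν
  obtain ⟨h₀, h₁⟩ := hν
  have hπ : 1.348 ≤ 2 * π - π ^ 2 / 2 := by nlinarith [pi_gt_d6, pi_lt_d6]
  have hweight : 16 + 5.56 * w ν ≤ (16 - 11.2 * ν) * (1 + 1.06 * ν) ^ 2 := by
    rcases le_total ν (1 / 2) with h | h
    · have hw₂ := w_le_sq ⟨h₀, h.trans (by norm_num)⟩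
      nlinarith [mul_nonneg h₀ (sub_nonneg.2 h), mul_nonneg (mul_nonneg h₀ h₀) (sub_nonneg.2 h)]
    · have hw₂ : w ν ≤ 2 / 3 := (w_le_two_div_pi ⟨h₀, h₁⟩).trans (by gcongr; exact pi_gt_three.le)
      have hx := sub_nonneg.2 h
      have hy := sub_nonneg.2 h₁
      nlinarith [mul_nonneg hx hy, mul_nonneg (mul_nonneg hx hy) h₀]
  have heta : eta ν ^ 2 * (16 + 5.56 * w ν) ≤ 16 - 11.2 * ν := by
    have := mul_le_mul_of_nonneg_left hweight (sq_nonneg (eta ν))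
    have := mul_le_mul_of_nonneg_left hX (show 0 ≤ 16 - 11.2 * ν by linarith)
    linarith
  have hsech := mul_le_mul_of_nonneg_left
    (show -1.39 ≤ 4 * (2 * π - π ^ 2 / 2) - 9 * 0.381 - 4 * 0.381 * t by linarith)
    (mul_nonneg (sq_nonneg (eta ν)) hw)
  rw [quadraticCoeff]
  linarith

lemma pfun_nonneg_of_sq_le {τ ν : ℝ} (hν : ν ∈ Icc (0 : ℝ) 1) (hτ : τ ^ 2 ≤ 2.2) :
    0 ≤ pfun τ ν := by
  have ht := sq_nonneg τ
  have hlin := mul_nonneg (linearCoeff_nonneg hν) ht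
  have hquad := mul_nonneg (quadraticCoeff_nonneg hν hτ) (sq_nonneg (τ ^ 2))
  have hsech := mul_le_mul_of_nonneg_left (quartic_le_sechTanh τ)
    (show 0 ≤ 4 * (9 + 4 * τ ^ 2) * (eta ν ^ 2 * w ν) from
      mul_nonneg (by positivity) (mul_nonneg (sq_nonneg _) (w_nonneg hν)))
  have hsqrt := mul_le_mul_of_nonneg_left (sqrt_le_quadratic hν ht)
    (mul_nonneg (by norm_num : (0 : ℝ) ≤ 8) hν.1)
  rw [linearCoeff] at hlin
  rw [quadraticCoeff] at hquad
  rw [pfun_eq hν]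
  linear_combination hlin + hquad + hsech + hsqrt

lemma mul_le_one_sub_eta_sq {ν : ℝ} (hν : ν ∈ Icc (0 : ℝ) 1) :
    ν * (1.26 - 0.5 * ν) ≤ 1 - eta ν ^ 2 := by
  have hX := eta_sq_mul_le hν
  obtain ⟨h₀, h₁⟩ := hν
  have hpoly : 1 ≤ (1 - ν * (1.26 - 0.5 * ν)) * (1 + 1.06 * ν) ^ 2 := by
    have hy := sub_nonneg.2 h₁
    nlinarith [mul_nonneg h₀ hy, mul_nonneg (mul_nonneg h₀ hy) h₀,
      mul_nonneg (mul_nonneg h₀ hy) (mul_nonneg h₀ h₀), mul_nonneg (mul_nonneg h₀ hy) hy,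
      mul_nonneg (mul_nonneg h₀ hy) (mul_nonneg hy hy)]
  linarith [le_of_mul_le_mul_right (hX.trans hpoly) (by positivity)]

lemma pfun_nonneg_of_le_sq {τ ν : ℝ} (hν : ν ∈ Icc (0 : ℝ) 1) (hτ : 2.2 ≤ τ ^ 2) :
    0 ≤ pfun τ ν := by
  have ht := sq_nonneg τ
  have hsech := mul_le_mul_of_nonneg_left (one_le_sechTanh τ)
    (show 0 ≤ 4 * (9 + 4 * τ ^ 2) * (eta ν ^ 2 * w ν) from
      mul_nonneg (by positivity) (mul_nonneg (sq_nonneg _) (w_nonneg hν)))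
  have hsqrt := mul_le_mul_of_nonneg_left (eight_mul_sqrt_le hν hτ) hν.1
  have heta := mul_le_mul_of_nonneg_right (mul_le_one_sub_eta_sq hν)
    (show 0 ≤ 4 * τ ^ 2 * (9 + 4 * τ ^ 2) by positivity)
  have hroot := mul_le_mul_of_nonneg_left (add_mul_le_etaRoot ν)
    (show 0 ≤ 8 / 9 * ν * (9 + 4 * τ ^ 2) from
      mul_nonneg (mul_nonneg (by norm_num) hν.1) (by positivity))
  have hmain : 0 ≤ ν * ((9 + 4 * τ ^ 2) * (4 * τ ^ 2 * (1.26 - 0.5 * ν)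
      + 8 / 9 * (2.4 + 1.2 * ν)) + 64 / 9 * ν * τ ^ 2
      - ((9 + 4 * τ ^ 2) * (3.04 * τ ^ 2 + 3.2) + 7.1 * τ ^ 2)) := by
    refine mul_nonneg hν.1 ?_
    generalize τ ^ 2 = t at *
    have hy := sub_nonneg.2 hν.2
    have hz := sub_nonneg.2 hτ
    nlinarith [mul_nonneg hy hz, mul_nonneg hy (mul_nonneg hz hz), mul_nonneg hy ht,
      mul_nonneg hy (mul_nonneg ht ht)]
  rw [pfun_eq hν]
  linear_combination hsech + hsqrt + heta + hroot + hmain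

theorem pfun_nonneg_general (τ : ℝ) {ν : ℝ} (hν : ν ∈ Icc (0 : ℝ) 1) : 0 ≤ pfun τ ν :=
  (le_total (τ ^ 2) 2.2).elim (pfun_nonneg_of_sq_le hν) (pfun_nonneg_of_le_sq hν)

/-- For every τ ∈ [0,∞) and ν ∈ [0,1] one has p(τ,ν) ≥ 0. -/
theorem pfun_nonneg (τ ν : ℝ) (hτ : 0 ≤ τ) (hν : ν ∈ Set.Icc (0 : ℝ) 1) :
    0 ≤ pfun τ ν :=
  pfun_nonneg_general τ hν
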